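/- Let K := ∫₀¹ ds/√(1 − s⁴), B_n := (2n+1)(π²/K²)·(−1)^{n+1} e^{−(n+1/2)π}/(1 + e^{−(2n+1)π}), m_n := (2n+1)M with M > 0, and define the gluon dressing function D(s) := s · Σ_{n≥0} B_n/(s − m_n²) for real s with 0 ≤ s < m₀². Then lim_{s→0⁺} D(s) = 0 and lim_{s→0⁺} D(s)/s = −Σ_{n≥0} B_n/m_n² ≠ 0. Consequently the infrared running coupling α_s(p) := (g²/4π) D(p²) [Z(p)]² with ghost dressing Z(p) = 1 vanishes as p² at lower momenta: α_s(p) = (g²/4π) p² f(p²) with f(0) ≠ 0, so the theory reaches a trivial infrared fixed point. -/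

import Mathlib

open Real Filter

/-- The complete elliptic integral `K(i) = ∫₀¹ ds/√(1 − s⁴)`. -/
noncomputable def Kell : ℝ := ∫ s in (0:ℝ)..1, 1 / Real.sqrt (1 - s ^ 4)

/-- The residues `B_n = (2n+1)(π²/K²)(−1)^{n+1} e^{−(n+1/2)π}/(1 + e^{−(2n+1)π})`
of the infrared gluon propagator. -/
noncomputable def Bcoef (n : ℕ) : ℝ :=
  (2 * (n : ℝ) + 1) * (π ^ 2 / Kell ^ 2) *
    ((-1) ^ (n + 1) * Real.exp (-(((n : ℝ) + 1 / 2)) * π)) / (1 + Real.exp (-(2 * (n : ℝ) + 1) * π))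

/-- The gluon dressing function `D(s) = s · Σ_n B_n/(s − m_n²)` with `m_n = (2n+1)M`. -/
noncomputable def Dress (M s : ℝ) : ℝ :=
  s * ∑' n : ℕ, Bcoef n / (s - ((2 * (n : ℝ) + 1) * M) ^ 2)

/-!
Since `e^{-x} / (1 + e^{-2x}) = 1 / (2 cosh x)`, the residues are
`B_n = -(-1)^n (π² / 2K²) (2n+1) / cosh ((n + 1/2) π)`. They are absolutely summable and every pole
`m_n²` is at distance at least `M²` from `0`, so by the Weierstrass test the propagator
`F(s) = ∑ B_n / (s - m_n²)` is continuous at `0`. As `D(s) = s F(s)`, both limits follow, and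
`f = F` is the required factor.

Its value `F(0) = (π² / 2K²M²) ∑ (-1)^n / ((2n+1) cosh ((n + 1/2) π))` is a positive multiple of an
alternating series with strictly decreasing terms, hence positive. That the multiple is not `0`
rests on `K > 0`, i.e. on the convergence of the elliptic integral at its endpoint singularity.
-/

section Series

lemma tsum_alternating_pos {a : ℕ → ℝ} (ha : Antitone a) (h10 : a 1 < a 0)
    (hsum : Summable fun n => (-1) ^ n * a n) : 0 < ∑' n, (-1) ^ n * a n := by
  have hle := ha.alternating_series_le_tendsto hsum.hasSum.tendsto_sum_nat 1
  have htwo : ∑ n ∈ Finset.range (2 * 1), (-1) ^ n * a n = a 0 - a 1 := by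
    simp [Finset.sum_range_succ, sub_eq_add_neg]
  linarith

lemma continuousAt_tsum_div_sub {ι 𝕜 : Type*} [NormedField 𝕜] [CompleteSpace 𝕜] {b c : ι → 𝕜}
    {x : 𝕜} {δ : ℝ} (hb : Summable fun i => ‖b i‖) (hδ : 0 < δ) (hc : ∀ i, δ ≤ ‖x - c i‖) :
    ContinuousAt (fun s => ∑' i, b i / (s - c i)) x := by
  have hdist : ∀ i, ∀ s ∈ Metric.ball x (δ / 2), δ / 2 ≤ ‖s - c i‖ := by
    intro i s hs
    have htri := norm_sub_le_norm_sub_add_norm_sub x s (c i)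
    rw [mem_ball_iff_norm'] at hs
    linarith [hc i]
  have hcont : ContinuousOn (fun s => ∑' i, b i / (s - c i)) (Metric.ball x (δ / 2)) := by
    refine continuousOn_tsum (fun i => ?_) (hb.div_const (δ / 2)) fun i s hs => ?_
    · exact continuousOn_const.div (by fun_prop) fun s hs =>
        norm_pos_iff.1 ((half_pos hδ).trans_le (hdist i s hs))
    · rw [norm_div]
      have := hdist i s hs
      gcongr
  exact hcont.continuousAt (Metric.ball_mem_nhds x (half_pos hδ))

end Series

section HyperbolicCosine

lemma exp_neg_div_one_add_exp_neg_two_mul (x : ℝ) :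
    exp (-x) / (1 + exp (-(2 * x))) = (cosh x)⁻¹ / 2 := by
  have hsq : exp (-(2 * x)) = exp (-x) * exp (-x) := by
    rw [← exp_add]
    ring_nf
  have hinv : exp x * exp (-x) = 1 := by rw [← exp_add, add_neg_cancel, exp_zero]
  rw [hsq, cosh_eq]
  field_simp
  linear_combination hinv

lemma inv_cosh_le_two_mul_exp_neg (x : ℝ) : (cosh x)⁻¹ ≤ 2 * exp (-x) := by
  rw [exp_neg, ← div_eq_mul_inv, ← inv_div]
  refine inv_anti₀ (by positivity) ?_
  rw [cosh_eq]
  linarith [exp_pos (-x)]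

lemma summable_pow_mul_inv_cosh (k : ℕ) {r : ℝ} (hr : 0 < r) (c : ℝ) :
    Summable fun n : ℕ => (n : ℝ) ^ k * (cosh (r * n + c))⁻¹ := by
  refine ((summable_pow_mul_exp_neg_nat_mul k hr).mul_left (2 * exp (-c))).of_nonneg_of_le
    (fun n => by have := cosh_pos (r * n + c); positivity) fun n => ?_
  calc (n : ℝ) ^ k * (cosh (r * n + c))⁻¹
      ≤ (n : ℝ) ^ k * (2 * exp (-(r * n + c))) := by
        gcongr
        exact inv_cosh_le_two_mul_exp_neg _
    _ = 2 * exp (-c) * ((n : ℝ) ^ k * exp (-r * n)) := by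
        rw [neg_add, exp_add, neg_mul]
        ring

lemma summable_odd_mul_inv_cosh :
    Summable fun n : ℕ => (2 * (n : ℝ) + 1) * (cosh (((n : ℝ) + 1 / 2) * π))⁻¹ := by
  have h0 := summable_pow_mul_inv_cosh 0 pi_pos (π / 2)
  have h1 := summable_pow_mul_inv_cosh 1 pi_pos (π / 2)
  refine ((h1.mul_left 2).add h0).congr fun n => ?_
  rw [show π * (n : ℝ) + π / 2 = ((n : ℝ) + 1 / 2) * π by ring]
  ring

lemma strictAnti_inv_odd_mul_cosh :
    StrictAnti fun n : ℕ => ((2 * (n : ℝ) + 1) * cosh (((n : ℝ) + 1 / 2) * π))⁻¹ := by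
  intro m n hmn
  have hcosh : cosh (((m : ℝ) + 1 / 2) * π) < cosh (((n : ℝ) + 1 / 2) * π) :=
    cosh_strictMonoOn (Set.mem_Ici.2 (by positivity)) (Set.mem_Ici.2 (by positivity)) (by gcongr)
  have := cosh_pos (((m : ℝ) + 1 / 2) * π)
  beta_reduce
  gcongr

lemma tsum_alternating_inv_odd_mul_cosh_pos :
    0 < ∑' n : ℕ, (-1) ^ n * ((2 * (n : ℝ) + 1) * cosh (((n : ℝ) + 1 / 2) * π))⁻¹ := by
  refine tsum_alternating_pos strictAnti_inv_odd_mul_cosh.antitone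
    (strictAnti_inv_odd_mul_cosh one_pos) ?_
  refine summable_odd_mul_inv_cosh.of_norm_bounded fun n => ?_
  have := cosh_pos (((n : ℝ) + 1 / 2) * π)
  have hodd : (1 : ℝ) ≤ 2 * n + 1 := by linarith [n.cast_nonneg (α := ℝ)]
  rw [norm_mul, norm_pow, norm_neg, norm_one, one_pow, one_mul, norm_of_nonneg (by positivity),
    mul_inv]
  gcongr
  exact (inv_le_one_of_one_le₀ hodd).trans hodd

end HyperbolicCosine

section EllipticIntegral

lemma intervalIntegrable_one_sub_rpow {r : ℝ} (hr : -1 < r) (a b : ℝ) :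
    IntervalIntegrable (fun s : ℝ => (1 - s) ^ r) MeasureTheory.volume a b := by
  simpa using
    (intervalIntegral.intervalIntegrable_rpow' (a := 1 - a) (b := 1 - b) hr).comp_sub_left 1

lemma one_div_sqrt_one_sub_pow_le {k : ℕ} (hk : k ≠ 0) {s : ℝ} (hs0 : 0 ≤ s) (hs1 : s < 1) :
    1 / √(1 - s ^ k) ≤ (1 - s) ^ (-(1 / 2) : ℝ) := by
  have hpow : s ^ k ≤ s := pow_le_of_le_one hs0 hs1.le hk
  have hsqrt : 0 < √(1 - s) := sqrt_pos.2 (by linarith)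
  rw [rpow_neg (by linarith), ← sqrt_eq_rpow, ← one_div]
  exact one_div_le_one_div_of_le hsqrt (sqrt_le_sqrt (by linarith))

lemma intervalIntegrable_one_div_sqrt_one_sub_pow {k : ℕ} (hk : k ≠ 0) :
    IntervalIntegrable (fun s : ℝ => 1 / √(1 - s ^ k)) MeasureTheory.volume 0 1 := by
  refine (intervalIntegrable_one_sub_rpow (r := -(1 / 2)) (by norm_num) 0 1).mono_fun' ?_ ?_
  · exact (by fun_prop : Measurable fun s : ℝ => 1 / √(1 - s ^ k)).aestronglyMeasurable
  · refine MeasureTheory.ae_restrict_of_forall_mem measurableSet_uIoc fun s hs => ?_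
    rw [Set.uIoc_of_le zero_le_one] at hs
    beta_reduce
    rw [norm_of_nonneg (by positivity)]
    rcases hs.2.eq_or_lt with rfl | hs1
    · simp
    · exact one_div_sqrt_one_sub_pow_le hk hs.1.le hs1

lemma Kell_pos : 0 < Kell := by
  refine intervalIntegral.intervalIntegral_pos_of_pos_on
    (intervalIntegrable_one_div_sqrt_one_sub_pow four_ne_zero) (fun s hs => ?_) one_pos
  exact one_div_pos.2 (sqrt_pos.2 (sub_pos.2 (pow_lt_one₀ hs.1.le hs.2 four_ne_zero)))

end EllipticIntegral

lemma Bcoef_eq_inv_cosh (n : ℕ) :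
    Bcoef n = -(-1) ^ n * (π ^ 2 / (2 * Kell ^ 2)) *
      ((2 * (n : ℝ) + 1) * (cosh (((n : ℝ) + 1 / 2) * π))⁻¹) := by
  have hsech := exp_neg_div_one_add_exp_neg_two_mul (((n : ℝ) + 1 / 2) * π)
  rw [show -(2 * (((n : ℝ) + 1 / 2) * π)) = -(2 * (n : ℝ) + 1) * π by ring, ← neg_mul] at hsech
  rw [Bcoef, mul_div_assoc, mul_div_assoc, hsech]
  ring

lemma summable_norm_Bcoef : Summable fun n => ‖Bcoef n‖ := by
  refine (summable_odd_mul_inv_cosh.norm.mul_left (π ^ 2 / (2 * Kell ^ 2))).congr fun n => ?_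
  have hconst : 0 ≤ π ^ 2 / (2 * Kell ^ 2) := by positivity
  simp only [Bcoef_eq_inv_cosh, norm_mul, norm_neg, norm_pow, norm_one, one_pow, one_mul,
    norm_of_nonneg hconst]

/-- The gluon propagator `F(s) = ∑ B_n / (s - m_n²)` as a function of `s = p²`, without the `iε`
prescription; at a pole `s = m_n²` the `n`-th term is `0`. -/
noncomputable def propagator (M s : ℝ) : ℝ :=
  ∑' n : ℕ, Bcoef n / (s - ((2 * (n : ℝ) + 1) * M) ^ 2)

lemma Dress_eq_mul_propagator (M s : ℝ) : Dress M s = s * propagator M s := rfl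

lemma propagator_zero (M : ℝ) :
    propagator M 0 = -∑' n : ℕ, Bcoef n / ((2 * (n : ℝ) + 1) * M) ^ 2 := by
  simp only [propagator, zero_sub, div_neg, tsum_neg]

lemma propagator_zero_eq_alternating (M : ℝ) :
    propagator M 0 = π ^ 2 / (2 * Kell ^ 2 * M ^ 2) *
      ∑' n : ℕ, (-1) ^ n * ((2 * (n : ℝ) + 1) * cosh (((n : ℝ) + 1 / 2) * π))⁻¹ := by
  rw [propagator, ← tsum_mul_left]
  congr 1 with n
  rw [Bcoef_eq_inv_cosh, zero_sub]
  field_simp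

section NonzeroMass

variable {M : ℝ}

lemma propagator_zero_pos (hM : M ≠ 0) : 0 < propagator M 0 := by
  have := Kell_pos
  have := tsum_alternating_inv_odd_mul_cosh_pos
  rw [propagator_zero_eq_alternating]
  positivity

lemma continuousAt_propagator_zero (hM : M ≠ 0) : ContinuousAt (propagator M) 0 := by
  refine continuousAt_tsum_div_sub summable_norm_Bcoef (by positivity : 0 < M ^ 2) fun n => ?_
  have hodd : (1 : ℝ) ≤ (2 * n + 1) ^ 2 :=
    one_le_pow₀ (by linarith [n.cast_nonneg (α := ℝ)])
  rw [zero_sub, norm_neg, norm_of_nonneg (by positivity), mul_pow]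
  exact le_mul_of_one_le_left (by positivity) hodd

lemma tendsto_Dress_zero (hM : M ≠ 0) : Tendsto (fun s => Dress M s) (nhds 0) (nhds 0) := by
  simpa only [Dress_eq_mul_propagator, id, zero_mul] using
    tendsto_id.mul (continuousAt_propagator_zero hM).tendsto

lemma tendsto_Dress_div_zero (hM : M ≠ 0) :
    Tendsto (fun s => Dress M s / s) (nhdsWithin 0 {0}ᶜ) (nhds (propagator M 0)) := by
  refine ((continuousAt_propagator_zero hM).tendsto.mono_left nhdsWithin_le_nhds).congr' ?_
  filter_upwards [self_mem_nhdsWithin] with s hs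
  rw [Dress_eq_mul_propagator, mul_div_cancel_left₀ _ hs]

end NonzeroMass

/-- `lim_{s→0⁺} D(s) = 0` and `lim_{s→0⁺} D(s)/s = −Σ_n B_n/m_n² ≠ 0`; consequently the
infrared running coupling `α_s(p) = (g²/4π) D(p²) Z(p)²` with ghost dressing `Z = 1`
vanishes as `p²` at lower momenta: `α_s = (g²/4π) p² f(p²)` with `f(0) ≠ 0`,
so the theory reaches a trivial infrared fixed point. -/
theorem stmt_10 (M : ℝ) (hM : 0 < M) :
    Tendsto (fun s => Dress M s) (nhdsWithin 0 (Set.Ioi 0)) (nhds 0) ∧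
    Tendsto (fun s => Dress M s / s) (nhdsWithin 0 (Set.Ioi 0))
      (nhds (-(∑' n : ℕ, Bcoef n / ((2 * (n : ℝ) + 1) * M) ^ 2))) ∧
    -(∑' n : ℕ, Bcoef n / ((2 * (n : ℝ) + 1) * M) ^ 2) ≠ 0 ∧
    ∃ f : ℝ → ℝ, f 0 ≠ 0 ∧ ContinuousWithinAt f (Set.Ici 0) 0 ∧
      ∀ g s : ℝ, 0 < s → s < ((2 * (0 : ℝ) + 1) * M) ^ 2 →
        g ^ 2 / (4 * π) * Dress M s * (1 : ℝ) ^ 2 = g ^ 2 / (4 * π) * s * f s := by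
  have hM0 : M ≠ 0 := hM.ne'
  rw [← propagator_zero]
  refine ⟨(tendsto_Dress_zero hM0).mono_left nhdsWithin_le_nhds,
    (tendsto_Dress_div_zero hM0).mono_left (nhdsWithin_mono 0 fun s hs => ne_of_gt hs),
    (propagator_zero_pos hM0).ne', propagator M, (propagator_zero_pos hM0).ne',
    (continuousAt_propagator_zero hM0).continuousWithinAt, fun g s _ _ => ?_⟩
  rw [Dress_eq_mul_propagator]
  ring
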